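/- Let m ≥ 3 and let A ≥ 0, B be integers with 10A + 5B - B² ≥ 0 and (A,B) ≢ (0,0) mod 5. Then there exist integers x₁, x₂, x₃, x₄ with P_m(x₁) + P_m(x₂) + P_m(x₃) + 2P_m(x₄) = A(m-2) + B. -/

import Mathlib

/-- The generalized `m`-gonal number `P_m(x) = ((m-2)x² - (m-4)x)/2`. -/
def polygonal (m x : ℤ) : ℤ := ((m - 2) * x ^ 2 - (m - 4) * x) / 2

/-!
The equation holds for every `m` as soon as `w · x = B` and `w · x² = 2A + B`, where
`w = (1, 1, 1, 2)`. Translating `x` by `(1, 1, 1, 1)` and changing its sign show that the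
solvability of this system depends only on `δ = 5 (2A + B) - B²`, which is even.

On the lattice `w · y = 0` the form `w · y²` is twice a positive ternary form `L` of
half-discriminant `5`. If `5 ∣ B`, then `5 ∤ δ / 10` and it suffices that `L` represents `δ / 10`.
Otherwise it suffices that `L` represents `5 δ / 2`: the resulting vector `y` is constant
modulo `5`, and dividing its differences by `5` gives a solution for `δ`.

Reduction theory shows that `L` is the only class of positive forms of half-discriminant `5`, so
that it is enough to find such a form representing the given number `n`. Take the form
`n x² + p y² + c z² + 2 s y z + k x z`; with `e = p c - s²` the condition reads
`4 n e - k² p = 5`. Dirichlet's theorem provides `e` and a prime `p` with this property, and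
quadratic reciprocity makes `-e` a square modulo `p`.
-/

open Matrix
open scoped MatrixGroups

section IntEquivalent

variable {n : Type*} [Fintype n] [DecidableEq n] {A B C : Matrix n n ℤ}

/-- Proper equivalence of integral quadratic forms, phrased for their Gram matrices: the forms
differ by a change of basis of determinant `1` of the lattice `ℤⁿ`. -/
def IntEquivalent (A B : Matrix n n ℤ) : Prop :=
  ∃ M : Matrix.SpecialLinearGroup n ℤ, (M : Matrix n n ℤ)ᵀ * A * (M : Matrix n n ℤ) = B

namespace IntEquivalent

theorem symm (h : IntEquivalent A B) : IntEquivalent B A := by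
  obtain ⟨M, rfl⟩ := h
  have hM : (M : Matrix n n ℤ) * ((M⁻¹ : Matrix.SpecialLinearGroup n ℤ) : Matrix n n ℤ) = 1 := by
    rw [← Matrix.SpecialLinearGroup.coe_mul, mul_inv_cancel, Matrix.SpecialLinearGroup.coe_one]
  refine ⟨M⁻¹, ?_⟩
  rw [Matrix.mul_assoc, Matrix.mul_assoc, hM, Matrix.mul_one, ← Matrix.mul_assoc,
    ← Matrix.transpose_mul, hM, Matrix.transpose_one, Matrix.one_mul]

theorem trans (hAB : IntEquivalent A B) (hBC : IntEquivalent B C) : IntEquivalent A C := by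
  obtain ⟨M, rfl⟩ := hAB
  obtain ⟨N, rfl⟩ := hBC
  exact ⟨M * N, by simp only [Matrix.SpecialLinearGroup.coe_mul, transpose_mul, Matrix.mul_assoc]⟩

theorem det_eq (h : IntEquivalent A B) : A.det = B.det := by
  obtain ⟨M, rfl⟩ := h
  simp only [det_mul, det_transpose, Matrix.SpecialLinearGroup.det_coe, one_mul, mul_one]

theorem exists_dotProduct_mulVec_eq (h : IntEquivalent A B) (v : n → ℤ) :
    ∃ w : n → ℤ, w ⬝ᵥ B *ᵥ w = v ⬝ᵥ A *ᵥ v := by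
  obtain ⟨M, rfl⟩ := h.symm
  refine ⟨M.1 *ᵥ v, ?_⟩
  rw [← mulVec_mulVec, ← mulVec_mulVec, dotProduct_mulVec v, vecMul_transpose]

end IntEquivalent

end IntEquivalent

theorem exists_abs_add_two_mul_mul_le {a : ℤ} (ha : 0 < a) (b : ℤ) :
    ∃ t : ℤ, |b + 2 * a * t| ≤ a := by
  refine ⟨-((b + a) / (2 * a)), abs_le.2 ?_⟩
  have hdiv := Int.emod_add_mul_ediv (b + a) (2 * a)
  have hnonneg := Int.emod_nonneg (b + a) (show 2 * a ≠ 0 by omega)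
  have hlt := Int.emod_lt_of_pos (b + a) (show 0 < 2 * a by omega)
  constructor <;> linarith

/-- The integral binary quadratic form `a x² + b x y + c y²`. -/
@[ext]
structure BinaryForm where
  (a b c : ℤ)

namespace BinaryForm

variable (Q : BinaryForm)

/-- The discriminant of a binary form, negative for definite forms. -/
def disc : ℤ := Q.b ^ 2 - 4 * Q.a * Q.c

/-- The form obtained from `Q` by the substitution `v ↦ M v`. -/
def comp (M : Matrix (Fin 2) (Fin 2) ℤ) : BinaryForm where
  a := Q.a * M 0 0 ^ 2 + Q.b * M 0 0 * M 1 0 + Q.c * M 1 0 ^ 2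
  b := 2 * Q.a * M 0 0 * M 0 1 + Q.b * (M 0 0 * M 1 1 + M 0 1 * M 1 0) + 2 * Q.c * M 1 0 * M 1 1
  c := Q.a * M 0 1 ^ 2 + Q.b * M 0 1 * M 1 1 + Q.c * M 1 1 ^ 2

/-- Gauss reduction of a positive definite binary form (without the conventions that single out one
reduced form in each class). -/
structure IsReduced : Prop where
  pos : 0 < Q.a
  abs_b_le : |Q.b| ≤ Q.a
  a_le_c : Q.a ≤ Q.c

variable {Q}

theorem comp_mul (M N : Matrix (Fin 2) (Fin 2) ℤ) : Q.comp (M * N) = (Q.comp M).comp N := by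
  ext <;> simp only [comp, Matrix.mul_apply, Fin.sum_univ_two] <;> ring

theorem disc_comp (M : SL(2, ℤ)) : (Q.comp M).disc = Q.disc := by
  have hdet : M 0 0 * M 1 1 - M 0 1 * M 1 0 = 1 := by rw [← det_fin_two, M.det_coe]
  have hcomp : (Q.comp M).disc = Q.disc * (M 0 0 * M 1 1 - M 0 1 * M 1 0) ^ 2 := by
    simp only [disc, comp]; ring
  rw [hcomp, hdet, one_pow, mul_one]

theorem c_pos (ha : 0 < Q.a) (hQ : Q.disc < 0) : 0 < Q.c := by
  unfold disc at hQ
  nlinarith [sq_nonneg Q.b]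

theorem IsReduced.three_mul_sq_le (h : Q.IsReduced) : 3 * Q.a ^ 2 ≤ -Q.disc := by
  have hb : Q.b ^ 2 ≤ Q.a ^ 2 := sq_le_sq.2 (h.abs_b_le.trans (le_abs_self _))
  have hac : Q.a * Q.a ≤ Q.a * Q.c := mul_le_mul_of_nonneg_left h.a_le_c h.pos.le
  unfold disc
  linarith

/-- The substitution `(x, y) ↦ (x + t y, y)`. -/
def shear (t : ℤ) : SL(2, ℤ) := ⟨!![1, t; 0, 1], by simp⟩

/-- The rotation `(x, y) ↦ (-y, x)`. -/
def rotation : SL(2, ℤ) := ⟨!![0, -1; 1, 0], by simp⟩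

theorem comp_shear (t : ℤ) :
    Q.comp (shear t) = ⟨Q.a, Q.b + 2 * Q.a * t, Q.a * t ^ 2 + Q.b * t + Q.c⟩ := by
  ext <;> simp [comp, shear]; ring

theorem comp_rotation : Q.comp rotation = ⟨Q.c, -Q.b, Q.a⟩ := by
  ext <;> simp [comp, rotation]

theorem exists_isReduced_comp (Q : BinaryForm) (ha : 0 < Q.a) (hQ : Q.disc < 0) :
    ∃ M : SL(2, ℤ), (Q.comp M).IsReduced := by
  induction hk : Q.a.toNat using Nat.strong_induction_on generalizing Q with
  | _ k ih =>
    obtain ⟨t, ht⟩ := exists_abs_add_two_mul_mul_le ha Q.b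
    set R := Q.comp (shear t) with hR
    have hRa : R.a = Q.a := by rw [hR, comp_shear]
    have hRb : |R.b| ≤ R.a := by rw [hR, comp_shear]; exact ht
    have hRdisc : R.disc < 0 := by rwa [hR, disc_comp]
    rcases le_or_gt R.a R.c with hac | hca
    · exact ⟨shear t, hRa ▸ ha, hRb, hac⟩
    · have hc : 0 < R.c := c_pos (hRa ▸ ha) hRdisc
      have hrot : (R.comp rotation).a = R.c := by rw [comp_rotation]
      obtain ⟨M, hM⟩ := ih R.c.toNat (by omega) (R.comp rotation) (hrot ▸ hc)
        (by rwa [disc_comp]) (by rw [hrot])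
      exact ⟨shear t * rotation * M, by
        simpa only [Matrix.SpecialLinearGroup.coe_mul, comp_mul, hR] using hM⟩

end BinaryForm

/-- The integral ternary quadratic form `a x² + b y² + c z² + d y z + e x z + f x y`. -/
@[ext]
structure TernaryForm where
  (a b c d e f : ℤ)

namespace TernaryForm

variable (Q : TernaryForm)

/-- Twice the matrix of the form, so that it is integral with even diagonal. -/
def gram : Matrix (Fin 3) (Fin 3) ℤ :=
  !![2 * Q.a, Q.f, Q.e; Q.f, 2 * Q.b, Q.d; Q.e, Q.d, 2 * Q.c]

/-- The half-discriminant, that is half the determinant of the Gram matrix. -/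
def disc : ℤ :=
  4 * Q.a * Q.b * Q.c + Q.d * Q.e * Q.f - Q.a * Q.d ^ 2 - Q.b * Q.e ^ 2 - Q.c * Q.f ^ 2

/-- The value of the form at `(x, y, z)`. -/
def eval (x y z : ℤ) : ℤ :=
  Q.a * x ^ 2 + Q.b * y ^ 2 + Q.c * z ^ 2 + Q.d * y * z + Q.e * x * z + Q.f * x * y

/-- The form `Q` takes the value `n`. -/
def Represents (n : ℤ) : Prop := ∃ x y z, Q.eval x y z = n

/-- The binary form `Q(x, y, 0)`. -/
def face : BinaryForm := ⟨Q.a, Q.f, Q.b⟩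

/-- The binary form obtained by completing the square in `x`, namely
`4 a Q(x, y, z) - (2 a x + f y + e z)²`. -/
def residual : BinaryForm :=
  ⟨4 * Q.a * Q.b - Q.f ^ 2, 2 * (2 * Q.a * Q.d - Q.e * Q.f), 4 * Q.a * Q.c - Q.e ^ 2⟩

/-- The leading principal minors of `Q` are positive (Sylvester's criterion). -/
structure IsPositive : Prop where
  a_pos : 0 < Q.a
  disc_face_neg : Q.face.disc < 0
  disc_pos : 0 < Q.disc

/-- Reduction in the sense of Gauss and Hermite, without the conventions that single out one reduced
form in each class; `|f| ≤ a ≤ b` is part of the reducedness of the face. -/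
structure IsReduced : Prop where
  face_isReduced : Q.face.IsReduced
  residual_isReduced : Q.residual.IsReduced
  abs_e_le : |Q.e| ≤ Q.a

variable {Q}

theorem det_gram : Q.gram.det = 2 * Q.disc := by
  simp [gram, disc, det_fin_three]; ring

theorem dotProduct_gram_mulVec (v : Fin 3 → ℤ) :
    v ⬝ᵥ Q.gram *ᵥ v = 2 * Q.eval (v 0) (v 1) (v 2) := by
  simp [gram, eval, mulVec, dotProduct, Fin.sum_univ_three]; ring

theorem disc_eq_of_intEquivalent {R : TernaryForm} (h : IntEquivalent Q.gram R.gram) :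
    Q.disc = R.disc := by
  have hdet := h.det_eq
  rw [det_gram, det_gram] at hdet
  linarith

theorem Represents.of_intEquivalent {R : TernaryForm} {n : ℤ} (hQ : Q.Represents n)
    (h : IntEquivalent Q.gram R.gram) : R.Represents n := by
  obtain ⟨x, y, z, rfl⟩ := hQ
  obtain ⟨w, hw⟩ := h.exists_dotProduct_mulVec_eq ![x, y, z]
  rw [dotProduct_gram_mulVec, dotProduct_gram_mulVec] at hw
  exact ⟨w 0, w 1, w 2, mul_left_cancel₀ two_ne_zero hw⟩

theorem disc_face : Q.face.disc = -Q.residual.a := by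
  simp only [face, residual, BinaryForm.disc]; ring

theorem disc_residual : Q.residual.disc = -(16 * Q.a * Q.disc) := by
  simp only [residual, disc, BinaryForm.disc]; ring

theorem IsPositive.disc_residual_neg (h : Q.IsPositive) : Q.residual.disc < 0 := by
  have := mul_pos h.a_pos h.disc_pos
  rw [disc_residual]
  linarith

variable (Q) in
/-- The form `Q(x, M (y, z))`. -/
def compTail (M : Matrix (Fin 2) (Fin 2) ℤ) : TernaryForm where
  a := Q.a
  b := Q.b * M 0 0 ^ 2 + Q.d * M 0 0 * M 1 0 + Q.c * M 1 0 ^ 2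
  c := Q.b * M 0 1 ^ 2 + Q.d * M 0 1 * M 1 1 + Q.c * M 1 1 ^ 2
  d := 2 * Q.b * M 0 0 * M 0 1 + Q.d * (M 0 0 * M 1 1 + M 0 1 * M 1 0) + 2 * Q.c * M 1 0 * M 1 1
  e := Q.e * M 1 1 + Q.f * M 0 1
  f := Q.e * M 1 0 + Q.f * M 0 0

theorem intEquivalent_compTail (M : SL(2, ℤ)) :
    IntEquivalent Q.gram (Q.compTail M).gram := by
  refine ⟨⟨!![1, 0, 0; 0, M 0 0, M 0 1; 0, M 1 0, M 1 1], ?_⟩, ?_⟩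
  · have hdet := M.det_coe
    rw [det_fin_two] at hdet
    simpa [det_fin_three] using hdet
  · ext i j
    fin_cases i <;> fin_cases j <;>
      simp [gram, compTail, Matrix.mul_apply, Fin.sum_univ_three] <;> ring

theorem residual_compTail (M : SL(2, ℤ)) : (Q.compTail M).residual = Q.residual.comp M := by
  ext <;> simp only [residual, compTail, BinaryForm.comp] <;> ring

variable (Q) in
/-- The form `Q(x + s y + t z, y, z)`. -/
def shear (s t : ℤ) : TernaryForm where
  a := Q.a
  b := Q.a * s ^ 2 + Q.f * s + Q.b
  c := Q.a * t ^ 2 + Q.e * t + Q.c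
  d := 2 * Q.a * s * t + Q.e * s + Q.f * t + Q.d
  e := Q.e + 2 * Q.a * t
  f := Q.f + 2 * Q.a * s

theorem intEquivalent_shear (s t : ℤ) : IntEquivalent Q.gram (Q.shear s t).gram := by
  refine ⟨⟨!![1, s, t; 0, 1, 0; 0, 0, 1], by simp [det_fin_three]⟩, ?_⟩
  ext i j
  fin_cases i <;> fin_cases j <;>
    simp [gram, shear, Matrix.mul_apply, Fin.sum_univ_three] <;> ring

theorem residual_shear (s t : ℤ) : (Q.shear s t).residual = Q.residual := by
  ext <;> simp only [residual, shear] <;> ring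

variable (Q) in
/-- The form `Q(-y, x, z)`. -/
def rotate : TernaryForm := ⟨Q.b, Q.a, Q.c, -Q.e, Q.d, -Q.f⟩

theorem intEquivalent_rotate : IntEquivalent Q.gram Q.rotate.gram := by
  refine ⟨⟨!![0, -1, 0; 1, 0, 0; 0, 0, 1], by simp [det_fin_three]⟩, ?_⟩
  ext i j
  fin_cases i <;> fin_cases j <;>
    simp [gram, rotate, Matrix.mul_apply, Fin.sum_univ_three]

theorem disc_face_rotate : Q.rotate.face.disc = Q.face.disc := by
  simp only [face, rotate, BinaryForm.disc]; ring

theorem IsPositive.rotate (h : Q.IsPositive) : Q.rotate.IsPositive where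
  a_pos := BinaryForm.c_pos (Q := Q.face) h.a_pos h.disc_face_neg
  disc_face_neg := by rw [disc_face_rotate]; exact h.disc_face_neg
  disc_pos := by rw [← disc_eq_of_intEquivalent intEquivalent_rotate]; exact h.disc_pos

/-- One round of Gauss's reduction: afterwards only `R.a ≤ R.b` is missing. -/
theorem IsPositive.exists_residual_isReduced (h : Q.IsPositive) :
    ∃ R : TernaryForm, IntEquivalent Q.gram R.gram ∧ R.a = Q.a ∧ R.residual.IsReduced ∧
      |R.e| ≤ R.a ∧ |R.f| ≤ R.a := by
  have hres : 0 < Q.residual.a := by linarith [h.disc_face_neg, disc_face (Q := Q)]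
  obtain ⟨M, hM⟩ := Q.residual.exists_isReduced_comp hres h.disc_residual_neg
  obtain ⟨s, hs⟩ := exists_abs_add_two_mul_mul_le h.a_pos (Q.compTail M).f
  obtain ⟨t, ht⟩ := exists_abs_add_two_mul_mul_le h.a_pos (Q.compTail M).e
  refine ⟨(Q.compTail M).shear s t, (intEquivalent_compTail M).trans (intEquivalent_shear s t),
    rfl, ?_, ht, hs⟩
  rwa [residual_shear, residual_compTail]

theorem IsPositive.exists_isReduced (h : Q.IsPositive) :
    ∃ R : TernaryForm, IntEquivalent Q.gram R.gram ∧ R.IsReduced := by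
  induction hk : Q.a.toNat using Nat.strong_induction_on generalizing Q with
  | _ k ih =>
    obtain ⟨R, hQR, hRa, hres, he, hf⟩ := h.exists_residual_isReduced
    have ha : 0 < R.a := hRa ▸ h.a_pos
    rcases le_or_gt R.a R.b with hab | hba
    · exact ⟨R, hQR, ⟨ha, hf, hab⟩, hres, he⟩
    · have hR : R.IsPositive :=
        ⟨ha, by rw [disc_face]; exact neg_neg_of_pos hres.pos,
          disc_eq_of_intEquivalent hQR ▸ h.disc_pos⟩
      have hb : 0 < R.b := hR.rotate.a_pos
      obtain ⟨S, hRS, hS⟩ := ih R.b.toNat (by omega) hR.rotate rfl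
      exact ⟨S, hQR.trans (intEquivalent_rotate.trans hRS), hS⟩

theorem IsReduced.three_mul_sq_residual_le (h : Q.IsReduced) :
    3 * Q.residual.a ^ 2 ≤ 16 * Q.a * Q.disc := by
  have := h.residual_isReduced.three_mul_sq_le
  rwa [disc_residual, neg_neg] at this

theorem IsReduced.a_pow_three_le (h : Q.IsReduced) : 27 * Q.a ^ 3 ≤ 16 * Q.disc := by
  have ha : 0 < Q.a := h.face_isReduced.pos
  have hres : 3 * Q.a ^ 2 ≤ Q.residual.a := by
    have := h.face_isReduced.three_mul_sq_le
    rwa [disc_face, neg_neg] at this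
  have hsq : (3 * Q.a ^ 2) ^ 2 ≤ Q.residual.a ^ 2 := pow_le_pow_left₀ (by positivity) hres 2
  refine le_of_mul_le_mul_left ?_ ha
  linarith [h.three_mul_sq_residual_le]

/-- `x² + y² + 2 z² + x y + x z + y z`: half of `y₁² + y₂² + y₃² + 2 y₄²` on the lattice
`y₁ + y₂ + y₃ + 2 y₄ = 0`. -/
def latticeForm : TernaryForm := ⟨1, 1, 2, 1, 1, 1⟩

theorem IsReduced.a_eq_one (h : Q.IsReduced) (hQ : Q.disc = 5) : Q.a = 1 := by
  have hpos : 0 < Q.a := h.face_isReduced.pos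
  have hlt : Q.a < 2 := lt_of_pow_lt_pow_left₀ 3 (by norm_num) (by linarith [h.a_pow_three_le])
  omega

theorem IsReduced.b_eq_one (h : Q.IsReduced) (hQ : Q.disc = 5) : Q.b = 1 := by
  have ha := h.a_eq_one hQ
  have hb : Q.a ≤ Q.b := h.face_isReduced.a_le_c
  have hf : Q.f ^ 2 ≤ Q.a ^ 2 := sq_le_sq.2 (h.face_isReduced.abs_b_le.trans (le_abs_self _))
  have hres := h.three_mul_sq_residual_le
  have hlt : Q.residual.a < 6 := by rw [ha, hQ] at hres; nlinarith
  simp only [residual, ha] at hlt hf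
  omega

theorem IsReduced.coeff_of_disc_eq_five (h : Q.IsReduced) (hQ : Q.disc = 5) :
    (Q.e = 1 ∨ Q.e = -1) ∧ (Q.f = 1 ∨ Q.f = -1) ∧ (Q.d = 0 ∨ Q.d = Q.e * Q.f) ∧
      Q.c = 2 := by
  have ha := h.a_eq_one hQ
  have hb := h.b_eq_one hQ
  obtain ⟨he, he'⟩ := abs_le.1 h.abs_e_le
  obtain ⟨hf, hf'⟩ := abs_le.1 h.face_isReduced.abs_b_le
  obtain ⟨hres, hres'⟩ := abs_le.1 h.residual_isReduced.abs_b_le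
  obtain ⟨a, b, c, d, e, f⟩ := Q
  simp only [disc, face, residual] at *
  subst ha hb
  have hd : -3 ≤ d ∧ d ≤ 3 := by
    interval_cases e <;> interval_cases f <;> omega
  obtain ⟨hd, hd'⟩ := hd
  interval_cases e <;> interval_cases f <;> interval_cases d <;> omega

theorem IsReduced.intEquivalent_latticeForm (h : Q.IsReduced) (hQ : Q.disc = 5) :
    IntEquivalent latticeForm.gram Q.gram := by
  have ha := h.a_eq_one hQ
  have hb := h.b_eq_one hQ
  obtain ⟨he, hf, hd, hc⟩ := h.coeff_of_disc_eq_five hQ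
  obtain ⟨a, b, c, d, e, f⟩ := Q
  dsimp only at ha hb hc hd he hf
  subst ha hb hc
  suffices h : ∃ M : Matrix (Fin 3) (Fin 3) ℤ,
      M.det = 1 ∧ Mᵀ * latticeForm.gram * M = gram ⟨1, 1, 2, d, e, f⟩ by
    obtain ⟨M, hdet, hM⟩ := h
    exact ⟨⟨M, hdet⟩, hM⟩
  rcases hd with rfl | rfl
  · use !![-(e * f), 0, -f; 0, -e, 0; 0, 0, f]
    rcases he with rfl | rfl <;> rcases hf with rfl | rfl <;> decide
  · use !![e * f, 0, 0; 0, e, 0; 0, 0, f]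
    rcases he with rfl | rfl <;> rcases hf with rfl | rfl <;> decide

theorem IsPositive.latticeForm_represents (h : Q.IsPositive) (hQ : Q.disc = 5) {n : ℤ}
    (hn : Q.Represents n) : latticeForm.Represents n := by
  obtain ⟨R, hQR, hR⟩ := h.exists_isReduced
  have hRdisc : R.disc = 5 := by rw [← disc_eq_of_intEquivalent hQR, hQ]
  exact hn.of_intEquivalent (hQR.trans (hR.intEquivalent_latticeForm hRdisc).symm)

end TernaryForm

section Arithmetic

open NumberTheorySymbols

theorem jacobiSym_neg_natCast_of_three_mod_four {a b : ℕ} (ha : a % 4 = 3) (hb : b % 4 = 3) :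
    J(-(a : ℤ) | b) = J((b : ℤ) | a) := by
  rw [jacobiSym.neg _ (Nat.odd_iff.2 (by omega)), ZMod.χ₄_nat_three_mod_four hb,
    jacobiSym.quadratic_reciprocity_three_mod_four ha hb]
  ring

theorem jacobiSym_neg_five {b : ℕ} (hb4 : b % 4 = 3) (hb5 : b % 5 = 2 ∨ b % 5 = 3) :
    J(-5 | b) = 1 := by
  have hodd : Odd b := Nat.odd_iff.2 (by omega)
  have h5 : J(5 | b) = -1 := by
    rw [← Nat.cast_ofNat (R := ℤ), jacobiSym.quadratic_reciprocity_one_mod_four (by norm_num) hodd,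
      jacobiSym.mod_left, ← Int.natCast_mod]
    rcases hb5 with h | h <;> rw [h] <;> norm_num
  rw [jacobiSym.neg _ hodd, ZMod.χ₄_nat_three_mod_four hb4, h5]
  norm_num

theorem exists_mul_sub_sq_eq {p : ℕ} (hp : p.Prime) {e : ℤ} (h : J(-e | p) = 1) :
    ∃ s c : ℤ, p * c - s ^ 2 = e := by
  have : Fact p.Prime := ⟨hp⟩
  obtain ⟨r, hr⟩ := ZMod.isSquare_of_jacobiSym_eq_one h
  obtain ⟨s, rfl⟩ := ZMod.intCast_surjective r
  have hdvd : ((e + s * s : ℤ) : ZMod p) = 0 := by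
    push_cast at hr ⊢
    rw [← hr, add_neg_cancel]
  obtain ⟨c, hc⟩ := (ZMod.intCast_zmod_eq_zero_iff_dvd _ p).1 hdvd
  exact ⟨s, c, by linarith⟩

theorem exists_prime_eq_add_mul {q : ℕ} {r : ℤ} (hq : 0 < q) (h : IsCoprime r q) :
    ∃ k p : ℕ, p.Prime ∧ (p : ℤ) = r + q * k := by
  obtain ⟨p, hpr, hp, hmod⟩ := Nat.forall_exists_prime_gt_and_zmodEq r.toNat hq.ne' h
  obtain ⟨k, hk⟩ := hmod.symm.dvd
  have hk_nonneg : 0 ≤ k := by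
    have hpos : 0 < (q : ℤ) * k := by omega
    exact (pos_of_mul_pos_right hpos (by positivity)).le
  lift k to ℕ using hk_nonneg
  exact ⟨k, p, hp, by linarith⟩

theorem latticeForm_represents_of_prime {n k : ℤ} {e p : ℕ} (hn : 0 < n) (hp : p.Prime)
    (he4 : e % 4 = 3) (he5 : e % 5 = 2 ∨ e % 5 = 3) (h : 4 * n * e - k ^ 2 * p = 5) :
    TernaryForm.latticeForm.Represents n := by
  have hke : k.gcd e = 1 := by
    have he : Nat.Coprime 5 e := (Nat.Prime.coprime_iff_not_dvd Nat.prime_five).2 (by omega)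
    obtain ⟨u, v, huv⟩ := Nat.isCoprime_iff_coprime.2 he
    push_cast at huv
    exact Int.isCoprime_iff_gcd_eq_one.1
      ⟨-(k * p * u), 4 * n * u + v, by linear_combination huv + u * h⟩
  have hp4 : p % 4 = 3 := by
    rcases Int.even_or_odd' k with ⟨i, rfl | rfl⟩
    · have : 5 = 4 * (n * e - i ^ 2 * p) := by linear_combination -h
      omega
    · have : (p : ℤ) = 4 * (n * e - (i ^ 2 + i) * p) - 5 := by linear_combination -h
      omega
  have hJ : J((p : ℤ) | e) = 1 := by
    have hmod : J(k ^ 2 * p | e) = J(-5 | e) :=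
      jacobiSym.mod_left' ((Int.modEq_iff_dvd.2 ⟨4 * n, by linear_combination -h⟩).symm)
    rwa [jacobiSym_neg_five he4 he5, jacobiSym.mul_left, jacobiSym.sq_one' hke, one_mul] at hmod
  rw [← jacobiSym_neg_natCast_of_three_mod_four he4 hp4] at hJ
  obtain ⟨s, c, hsc⟩ := exists_mul_sub_sq_eq hp hJ
  let Q : TernaryForm := ⟨n, p, c, 2 * s, k, 0⟩
  have hQ : Q.disc = 5 := by
    simp only [Q, TernaryForm.disc]
    linear_combination 4 * n * hsc + h
  have hpos : Q.IsPositive := by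
    refine ⟨hn, ?_, by rw [hQ]; norm_num⟩
    have := mul_pos hn (Int.natCast_pos.2 hp.pos)
    simp only [Q, TernaryForm.face, BinaryForm.disc]
    linarith
  exact hpos.latticeForm_represents hQ ⟨1, 0, 0, by simp [Q, TernaryForm.eval]⟩

theorem latticeForm_represents_of_not_five_dvd {n : ℤ} (hn : 0 < n) (h5 : ¬ 5 ∣ n) :
    TernaryForm.latticeForm.Represents n := by
  lift n to ℕ using hn.le
  have hcop : IsCoprime (12 * n - 5 : ℤ) (80 * n : ℕ) := by
    have h_two : IsCoprime (12 * n - 5 : ℤ) 2 := ⟨1, 3 - 6 * n, by ring⟩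
    have h_prime : Prime (5 : ℤ) := by norm_num
    obtain ⟨u, v, huv⟩ := h_prime.coprime_iff_not_dvd.2 h5
    have h_five : IsCoprime (12 * n - 5 : ℤ) 5 :=
      ⟨3 * v, 36 * u + 3 * v - 7, by linear_combination 36 * huv⟩
    have h_n : IsCoprime (12 * n - 5 : ℤ) n := ⟨-u, v + 12 * u, by linear_combination huv⟩
    have hfac : ((80 * n : ℕ) : ℤ) = 2 ^ 4 * 5 * n := by push_cast; ring
    rw [hfac]
    exact (h_two.pow_right.mul_right h_five).mul_right h_n
  obtain ⟨k, p, hp, hpk⟩ := exists_prime_eq_add_mul (by omega) hcop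
  refine latticeForm_represents_of_prime (k := 1) (e := 20 * k + 3) hn hp (by omega) (by omega) ?_
  rw [hpk]
  push_cast
  ring

theorem latticeForm_represents_five_mul {n : ℤ} (hn : 0 < n) (h5 : n % 5 = 2 ∨ n % 5 = 3) :
    TernaryForm.latticeForm.Represents (5 * n) := by
  lift n to ℕ using hn.le
  obtain ⟨e₀, he4, he5, r, hr⟩ : ∃ e₀ : ℕ, e₀ % 4 = 3 ∧ (e₀ % 5 = 2 ∨ e₀ % 5 = 3) ∧
      ∃ r : ℤ, 4 * n * e₀ - 1 = 5 * r := by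
    rcases h5 with h | h
    · exact ⟨7, by norm_num, by norm_num, (28 * n - 1) / 5, by omega⟩
    · exact ⟨3, by norm_num, by norm_num, (12 * n - 1) / 5, by omega⟩
  have hcop : IsCoprime r (16 * n : ℕ) := by
    have h_two : IsCoprime r 2 := ⟨-5, 2 * n * e₀, by linear_combination hr⟩
    have h_n : IsCoprime r n := ⟨-5, 4 * e₀, by linear_combination hr⟩
    have hfac : ((16 * n : ℕ) : ℤ) = 2 ^ 4 * n := by push_cast; ring
    rw [hfac]
    exact h_two.pow_right.mul_right h_n
  obtain ⟨k, p, hp, hpk⟩ := exists_prime_eq_add_mul (by omega) hcop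
  refine latticeForm_represents_of_prime (k := 5) (e := 20 * k + e₀) (by omega) hp (by omega)
    (by omega) ?_
  rw [hpk]
  push_cast
  linear_combination 5 * hr

/-- Modulo `5` the quadratic form is anisotropic on the hyperplane `y₁ + y₂ + y₃ + 2 y₄ = 0` up to
its radical, spanned by `(1, 1, 1, 1)`. -/
theorem five_dvd_sub_of_five_dvd_sum_sq {y₁ y₂ y₃ y₄ : ℤ} (hsum : y₁ + y₂ + y₃ + 2 * y₄ = 0)
    (hsq : 5 ∣ y₁ ^ 2 + y₂ ^ 2 + y₃ ^ 2 + 2 * y₄ ^ 2) :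
    5 ∣ y₁ - y₄ ∧ 5 ∣ y₂ - y₄ ∧ 5 ∣ y₃ - y₄ := by
  have hmod : ∀ y₁ y₂ y₃ y₄ : ZMod 5, y₁ + y₂ + y₃ + 2 * y₄ = 0 →
      y₁ ^ 2 + y₂ ^ 2 + y₃ ^ 2 + 2 * y₄ ^ 2 = 0 →
      y₁ - y₄ = 0 ∧ y₂ - y₄ = 0 ∧ y₃ - y₄ = 0 := by decide
  have hcast (x : ℤ) : 5 ∣ x ↔ (x : ZMod 5) = 0 := (ZMod.intCast_zmod_eq_zero_iff_dvd x 5).symm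
  simp only [hcast] at hsq ⊢
  push_cast at hsq ⊢
  exact hmod _ _ _ _ (by exact_mod_cast congrArg (Int.cast : ℤ → ZMod 5) hsum) hsq

end Arithmetic

/-- A variant of the system in Cauchy's lemma on polygonal numbers, for weights `1, 1, 1, 2`: `a`
and `b` are the weighted sums of the squares and of the terms of one integer vector. -/
def CauchySolvable (a b : ℤ) : Prop :=
  ∃ x₁ x₂ x₃ x₄ : ℤ, x₁ ^ 2 + x₂ ^ 2 + x₃ ^ 2 + 2 * x₄ ^ 2 = a ∧ x₁ + x₂ + x₃ + 2 * x₄ = b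

namespace CauchySolvable

variable {a b a' b' : ℤ}

theorem of_represents {n : ℤ} (h : TernaryForm.latticeForm.Represents n) :
    CauchySolvable (2 * n) 0 := by
  obtain ⟨x, y, z, rfl⟩ := h
  refine ⟨y + z, x + z, -(x + y), -z, ?_, by ring⟩
  simp only [TernaryForm.eval, TernaryForm.latticeForm]
  ring

theorem neg (h : CauchySolvable a b) : CauchySolvable a (-b) := by
  obtain ⟨x₁, x₂, x₃, x₄, rfl, rfl⟩ := h
  exact ⟨-x₁, -x₂, -x₃, -x₄, by ring, by ring⟩

theorem translate (h : CauchySolvable a b) (k : ℤ) :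
    CauchySolvable (a + 2 * k * b + 5 * k ^ 2) (b + 5 * k) := by
  obtain ⟨x₁, x₂, x₃, x₄, rfl, rfl⟩ := h
  exact ⟨x₁ + k, x₂ + k, x₃ + k, x₄ + k, by ring, by ring⟩

/-- Solvability only depends on `5 * a - b ^ 2`: this quantity fixes `b` modulo `5` up to sign, and
translation along `(1, 1, 1, 1)` moves `b` by multiples of `5`. -/
theorem congr (h : CauchySolvable a b) (heq : 5 * a - b ^ 2 = 5 * a' - b' ^ 2) :
    CauchySolvable a' b' := by
  have key {c : ℤ} (hc : CauchySolvable a c) (hsq : c ^ 2 = b ^ 2) (hdvd : 5 ∣ b' - c) :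
      CauchySolvable a' b' := by
    obtain ⟨k, hk⟩ := hdvd
    obtain rfl : b' = c + 5 * k := by linarith
    have ha' : a' = a + 2 * k * c + 5 * k ^ 2 := by linarith
    exact ha' ▸ hc.translate k
  have hprod : 5 ∣ (b' - b) * (b' - -b) := ⟨a' - a, by linear_combination heq⟩
  have h_prime : Prime (5 : ℤ) := by norm_num
  rcases h_prime.dvd_or_dvd hprod with hdvd | hdvd
  · exact key h rfl hdvd
  · exact key h.neg (neg_sq b) hdvd

theorem exists_of_five_mul (h : CauchySolvable (5 * a) 0) :
    ∃ c s : ℤ, CauchySolvable c s ∧ 5 * c - s ^ 2 = a := by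
  obtain ⟨y₁, y₂, y₃, t, hsq, hsum⟩ := h
  obtain ⟨⟨z₁, hz₁⟩, ⟨z₂, hz₂⟩, ⟨z₃, hz₃⟩⟩ := five_dvd_sub_of_five_dvd_sum_sq hsum ⟨a, hsq⟩
  obtain rfl : y₁ = t + 5 * z₁ := by linarith
  obtain rfl : y₂ = t + 5 * z₂ := by linarith
  obtain rfl : y₃ = t + 5 * z₃ := by linarith
  obtain rfl : t = -(z₁ + z₂ + z₃) := by linarith
  exact ⟨_, _, ⟨z₁, z₂, z₃, 0, rfl, rfl⟩, by linarith⟩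

theorem of_five_dvd {n : ℤ} (hn : 0 < n) (h5 : ¬ 5 ∣ n) (h : 5 * a - b ^ 2 = 10 * n) :
    CauchySolvable a b :=
  (of_represents (latticeForm_represents_of_not_five_dvd hn h5)).congr (by linarith)

theorem of_mod_five {n : ℤ} (hn : 0 < n) (h5 : n % 5 = 2 ∨ n % 5 = 3)
    (h : 5 * a - b ^ 2 = 2 * n) : CauchySolvable a b := by
  have h' : CauchySolvable (5 * (2 * n)) 0 := by
    convert of_represents (latticeForm_represents_five_mul hn h5) using 1
    ring
  obtain ⟨c, s, hcs, heq⟩ := h'.exists_of_five_mul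
  exact hcs.congr (heq.trans h.symm)

theorem two_mul_add {A B : ℤ} (hd : 0 ≤ 10 * A + 5 * B - B ^ 2)
    (hmod : ¬(A % 5 = 0 ∧ B % 5 = 0)) : CauchySolvable (2 * A + B) B := by
  by_cases hB : 5 ∣ B
  · obtain ⟨k, rfl⟩ := hB
    obtain ⟨j, hj⟩ := (Int.even_mul_pred_self k).two_dvd
    have hn : 5 * (2 * A + 5 * k) - (5 * k) ^ 2 = 10 * (A - 5 * j) := by linear_combination -25 * hj
    exact of_five_dvd (by omega) (by omega) hn
  · obtain ⟨j, hj⟩ := (Int.even_mul_pred_self B).two_dvd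
    have hn : 5 * (2 * A + B) - B ^ 2 = 2 * (5 * A + 2 * B - j) := by linear_combination -hj
    have hB_sq : B ^ 2 % 5 = 1 ∨ B ^ 2 % 5 = 4 := by
      have : B % 5 = 1 ∨ B % 5 = 2 ∨ B % 5 = 3 ∨ B % 5 = 4 := by omega
      rcases this with h | h | h | h <;> simp [pow_two, Int.mul_emod, h]
    exact of_mod_five (by omega) (by omega) hn

end CauchySolvable

theorem two_mul_polygonal (m x : ℤ) : 2 * polygonal m x = (m - 2) * (x ^ 2 - x) + 2 * x := by
  obtain ⟨c, hc⟩ := (Int.even_mul_pred_self x).two_dvd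
  have hdvd : (2 : ℤ) ∣ (m - 2) * x ^ 2 - (m - 4) * x :=
    ⟨(m - 2) * c + x, by linear_combination (m - 2) * hc⟩
  rw [polygonal, Int.mul_ediv_cancel' hdvd]
  ring

theorem rep_1112_general (A B : ℤ) (hd : 0 ≤ 10 * A + 5 * B - B ^ 2)
    (hmod : ¬ (A % 5 = 0 ∧ B % 5 = 0)) :
    ∃ x₁ x₂ x₃ x₄ : ℤ, ∀ m : ℤ,
      polygonal m x₁ + polygonal m x₂ + polygonal m x₃ + 2 * polygonal m x₄ =
        A * (m - 2) + B := by
  obtain ⟨x₁, x₂, x₃, x₄, hsq, hsum⟩ := CauchySolvable.two_mul_add hd hmod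
  refine ⟨x₁, x₂, x₃, x₄, fun m => mul_left_cancel₀ (two_ne_zero (α := ℤ)) ?_⟩
  linear_combination two_mul_polygonal m x₁ + two_mul_polygonal m x₂ + two_mul_polygonal m x₃ +
    2 * two_mul_polygonal m x₄ + (m - 2) * (hsq - hsum) + 2 * hsum

theorem rep_1112 (m : ℤ) (hm : 3 ≤ m) (A B : ℤ) (hA : 0 ≤ A)
    (hd : 0 ≤ 10 * A + 5 * B - B ^ 2)
    (hmod : ¬ (A % 5 = 0 ∧ B % 5 = 0)) :
    ∃ x₁ x₂ x₃ x₄ : ℤ,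
      polygonal m x₁ + polygonal m x₂ + polygonal m x₃ + 2 * polygonal m x₄ =
        A * (m - 2) + B := by
  obtain ⟨x₁, x₂, x₃, x₄, h⟩ := rep_1112_general A B hd hmod
  exact ⟨x₁, x₂, x₃, x₄, h m⟩
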